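/- Suppose every agent in N has at least one acceptable project. Fix an agent 1 ∈ N and let C, C' ∈ ℝ^N be contribution profiles with C_i = C'_i > 0 for all i ≠ 1 and 0 < C_1 ≤ C'_1. If δ maximizes the Nash product δ ↦ ∏_{i∈N} (u_i(δ))^{C_i} over Δ(1) and δ' maximizes δ ↦ ∏_{i∈N} (u_i(δ))^{C'_i} over Δ(1), then u_1(δ') ≥ u_1(δ). -/

import Mathlib

open Finset

/-- A distribution of value `V`: nonnegative and sums to `V`. -/
def IsDistribution {A : Type*} [Fintype A] (δ : A → ℝ) (V : ℝ) : Prop :=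
  (∀ x, 0 ≤ δ x) ∧ ∑ x, δ x = V

/-- Agent's (linear) utility of a distribution. -/
def util {A : Type*} [Fintype A] (u : A → ℝ) (δ : A → ℝ) : ℝ :=
  ∑ x, δ x * u x

/-- The Nash product of a distribution (real exponentiation, `0 ^ 0 = 1`). -/
noncomputable def nashProduct {A N : Type*} [Fintype A] [Fintype N]
    (u : N → A → ℝ) (C : N → ℝ) (δ : A → ℝ) : ℝ :=
  ∏ i, (util (u i) δ) ^ (C i)

/-- A Nash distribution for contribution profile `C`: a maximizer of the Nash
product over `Δ(|C|)`. -/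
def IsNashDistribution {A N : Type*} [Fintype A] [Fintype N]
    (u : N → A → ℝ) (C : N → ℝ) (δ : A → ℝ) : Prop :=
  IsDistribution δ (∑ i, C i) ∧
    ∀ δ' : A → ℝ, IsDistribution δ' (∑ i, C i) →
      nashProduct u C δ' ≤ nashProduct u C δ

/-!
If the contribution of agent `one` strictly increases, the new Nash product is the old one times a
positive power of the utility of `one`. The old maximizer is at least as good for the old product
and the new maximizer at least as good for the new one, so the extra factor cannot be smaller at
the new maximizer. If the contribution is unchanged, both distributions maximize the same product,
and strict AM-GM at their midpoint shows that they give equal utility to every contributor.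

Only concavity and nonnegativity of the utilities on a convex set matter. An average of points that
please one agent each pleases all of them, so the maximal Nash product is positive.
-/

lemma le_of_isMaxOn_of_isMaxOn_mul {α R : Type*} [Semiring R] [LinearOrder R]
    [IsStrictOrderedRing R] {f g : α → R} {s : Set α} {a b : α}
    (ha : a ∈ s) (hb : b ∈ s) (hfa : IsMaxOn f s a) (hfgb : IsMaxOn (fun x => f x * g x) s b)
    (hfb : 0 < f b) (hga : 0 ≤ g a) : g a ≤ g b := by
  have hmul : f b * g a ≤ f b * g b :=
    calc f b * g a ≤ f a * g a := mul_le_mul_of_nonneg_right (hfa hb) hga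
      _ ≤ f b * g b := hfgb ha
  exact le_of_mul_le_mul_left hmul hfb

section Midpoint

variable {𝕜 : Type*} [Field 𝕜] [LinearOrder 𝕜] [IsStrictOrderedRing 𝕜]

lemma mul_le_midpoint_sq (a b : 𝕜) : a * b ≤ midpoint 𝕜 a b ^ 2 := by
  rw [midpoint_eq_smul_add, smul_eq_mul, invOf_eq_inv]
  linarith [sq_nonneg (a - b)]

lemma mul_lt_midpoint_sq {a b : 𝕜} (hab : a ≠ b) : a * b < midpoint 𝕜 a b ^ 2 := by
  rw [midpoint_eq_smul_add, smul_eq_mul, invOf_eq_inv]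
  linarith [sq_pos_of_ne_zero (sub_ne_zero.2 hab)]

lemma midpoint_le_map_midpoint {E β : Type*} [AddCommGroup E] [Module 𝕜 E] [AddCommGroup β]
    [PartialOrder β] [Module 𝕜 β] {S : Set E} {f : E → β} (hf : ConcaveOn 𝕜 S f) {x y : E}
    (hx : x ∈ S) (hy : y ∈ S) : midpoint 𝕜 (f x) (f y) ≤ f (midpoint 𝕜 x y) := by
  simp only [midpoint_eq_smul_add, smul_add, invOf_eq_inv]
  exact hf.2 hx hy (by simp) (by simp) (by field_simp; norm_num)

end Midpoint

section NashWelfare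

variable {N : Type*} [Fintype N] {C C' y z : N → ℝ}

/-- The Nash product of a utility profile `y` with exponents `C`: `nashProduct` as a function of the
agents' utilities alone, so that it applies to utilities on an arbitrary set of outcomes. -/
noncomputable def nashWelfare (C y : N → ℝ) : ℝ :=
  ∏ i, y i ^ C i

lemma nashWelfare_nonneg (hy : 0 ≤ y) : 0 ≤ nashWelfare C y :=
  prod_nonneg fun i _ => Real.rpow_nonneg (hy i) _

lemma nashWelfare_pos (hy : ∀ i, 0 < y i) : 0 < nashWelfare C y :=
  prod_pos fun i _ => Real.rpow_pos_of_pos (hy i) _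

lemma rpow_pos_of_nashWelfare_pos (hy : 0 ≤ y) (h : 0 < nashWelfare C y) (i : N) :
    0 < y i ^ C i :=
  (Real.rpow_nonneg (hy i) _).lt_of_ne' (prod_ne_zero_iff.1 h.ne' i (mem_univ i))

lemma nashWelfare_le_nashWelfare (hC : 0 ≤ C) (hy : 0 ≤ y) (hyz : y ≤ z) :
    nashWelfare C y ≤ nashWelfare C z :=
  prod_le_prod (fun i _ => Real.rpow_nonneg (hy i) _)
    fun i _ => Real.rpow_le_rpow (hy i) (hyz i) (hC i)

lemma nashWelfare_mul_lt_nashWelfare_midpoint_sq (hC : 0 ≤ C) (hy : 0 ≤ y) (hz : 0 ≤ z)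
    (hCy : 0 < nashWelfare C y) (hCz : 0 < nashWelfare C z) {i : N} (hCi : 0 < C i)
    (hi : y i ≠ z i) :
    nashWelfare C y * nashWelfare C z < nashWelfare C (midpoint ℝ y z) ^ 2 := by
  have hmid : 0 ≤ midpoint ℝ y z := (convex_Ici (0 : N → ℝ)).midpoint_mem hy hz
  have hsq (j : N) : (midpoint ℝ y z j ^ C j) ^ 2 = (midpoint ℝ (y j) (z j) ^ 2) ^ C j := by
    rw [← pi_midpoint_apply y z j, sq, sq, Real.mul_rpow (hmid j) (hmid j)]
  simp only [nashWelfare, ← prod_mul_distrib, ← prod_pow, hsq]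
  refine prod_lt_prod (fun j _ => ?_) (fun j _ => ?_) ⟨i, mem_univ i, ?_⟩
  · exact mul_pos (rpow_pos_of_nashWelfare_pos hy hCy j) (rpow_pos_of_nashWelfare_pos hz hCz j)
  · rw [← Real.mul_rpow (hy j) (hz j)]
    exact Real.rpow_le_rpow (mul_nonneg (hy j) (hz j)) (mul_le_midpoint_sq _ _) (hC j)
  · rw [← Real.mul_rpow (hy i) (hz i)]
    exact Real.rpow_lt_rpow (mul_nonneg (hy i) (hz i)) (mul_lt_midpoint_sq hi) hCi

lemma nashWelfare_eq_mul_rpow_sub {i : N} (hC : 0 ≤ C i) (hCC' : C i ≤ C' i)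
    (hne : ∀ j, j ≠ i → C j = C' j) (hy : 0 ≤ y i) :
    nashWelfare C' y = nashWelfare C y * y i ^ (C' i - C i) := by
  classical
  have hrest : ∏ j ∈ univ.erase i, y j ^ C' j = ∏ j ∈ univ.erase i, y j ^ C j :=
    prod_congr rfl fun j hj => by rw [hne j (ne_of_mem_erase hj)]
  have hi : y i ^ C' i = y i ^ C i * y i ^ (C' i - C i) := by
    rw [← Real.rpow_add_of_nonneg hy hC (sub_nonneg.2 hCC'), add_sub_cancel]
  rw [nashWelfare, nashWelfare, ← mul_prod_erase univ _ (mem_univ i),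
    ← mul_prod_erase univ (fun j => y j ^ C j) (mem_univ i), hrest, hi, mul_right_comm]

end NashWelfare

section ConcaveUtilities

variable {E N : Type*} [AddCommGroup E] [Module ℝ E] {S : Set E} {v : N → E → ℝ}
  {C C' : N → ℝ} {x x' : E}

lemma exists_forall_pos_of_concaveOn [Finite N] [Nonempty N] (hv : ∀ i, ConcaveOn ℝ S (v i))
    (hv₀ : ∀ i, ∀ y ∈ S, 0 ≤ v i y) (hpos : ∀ i, ∃ y ∈ S, 0 < v i y) :
    ∃ y ∈ S, ∀ i, 0 < v i y := by
  cases nonempty_fintype N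
  choose p hpS hp using hpos
  let w : N → ℝ := fun _ => (Fintype.card N : ℝ)⁻¹
  have hw : ∀ j, 0 < w j := fun _ => by simp only [w]; positivity
  have hw₁ : ∑ j, w j = 1 := by simp [w]
  refine ⟨∑ j, w j • p j, ?_, fun i => ?_⟩
  · exact (hv (Classical.arbitrary N)).1.sum_mem (fun j _ => (hw j).le) hw₁ fun j _ => hpS j
  · calc 0 < ∑ j, w j • v i (p j) :=
          sum_pos' (fun j _ => mul_nonneg (hw j).le (hv₀ i _ (hpS j)))
            ⟨i, mem_univ i, mul_pos (hw i) (hp i)⟩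
      _ ≤ v i (∑ j, w j • p j) :=
          (hv i).le_map_sum (fun j _ => (hw j).le) hw₁ fun j _ => hpS j

variable [Fintype N]

lemma nashWelfare_pos_of_isMaxOn [Nonempty N] (hv : ∀ i, ConcaveOn ℝ S (v i))
    (hv₀ : ∀ i, ∀ y ∈ S, 0 ≤ v i y) (hpos : ∀ i, ∃ y ∈ S, 0 < v i y)
    (hmax : IsMaxOn (fun y => nashWelfare C (v · y)) S x) : 0 < nashWelfare C (v · x) := by
  obtain ⟨y, hyS, hy⟩ := exists_forall_pos_of_concaveOn hv hv₀ hpos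
  exact (nashWelfare_pos hy).trans_le (hmax hyS)

lemma eq_of_isMaxOn_nashWelfare (hv : ∀ i, ConcaveOn ℝ S (v i))
    (hv₀ : ∀ i, ∀ y ∈ S, 0 ≤ v i y) (hpos : ∀ i, ∃ y ∈ S, 0 < v i y) (hC : 0 ≤ C)
    (hx : x ∈ S) (hx' : x' ∈ S) (hmax : IsMaxOn (fun y => nashWelfare C (v · y)) S x)
    (hmax' : IsMaxOn (fun y => nashWelfare C (v · y)) S x') {i : N} (hCi : 0 < C i) :
    v i x = v i x' := by
  have : Nonempty N := ⟨i⟩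
  have hvx : 0 ≤ (v · x) := fun j => hv₀ j x hx
  have hvx' : 0 ≤ (v · x') := fun j => hv₀ j x' hx'
  have hWx := nashWelfare_pos_of_isMaxOn hv hv₀ hpos hmax
  have hWx' := nashWelfare_pos_of_isMaxOn hv hv₀ hpos hmax'
  by_contra hne
  have hmid_mem : midpoint ℝ x x' ∈ S := (hv i).1.midpoint_mem hx hx'
  have hmid : 0 ≤ midpoint ℝ (v · x) (v · x') := (convex_Ici (0 : N → ℝ)).midpoint_mem hvx hvx'
  refine lt_irrefl (nashWelfare C (v · x) * nashWelfare C (v · x')) ?_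
  calc nashWelfare C (v · x) * nashWelfare C (v · x')
      < nashWelfare C (midpoint ℝ (v · x) (v · x')) ^ 2 :=
        nashWelfare_mul_lt_nashWelfare_midpoint_sq hC hvx hvx' hWx hWx' hCi hne
    _ ≤ nashWelfare C (v · (midpoint ℝ x x')) ^ 2 := by
        refine pow_le_pow_left₀ (nashWelfare_nonneg hmid) ?_ 2
        exact nashWelfare_le_nashWelfare hC hmid fun j => midpoint_le_map_midpoint (hv j) hx hx'
    _ ≤ nashWelfare C (v · x) * nashWelfare C (v · x') := by
        rw [sq]
        exact mul_le_mul (hmax hmid_mem) (hmax' hmid_mem)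
          (nashWelfare_nonneg fun j => hv₀ j _ hmid_mem) hWx.le

theorem nash_utility_monotone_in_contribution_general (hv : ∀ i, ConcaveOn ℝ S (v i))
    (hv₀ : ∀ i, ∀ y ∈ S, 0 ≤ v i y) (hpos : ∀ i, ∃ y ∈ S, 0 < v i y) {one : N}
    (hC : 0 ≤ C) (hC'one : 0 < C' one) (hCC' : ∀ i, i ≠ one → C i = C' i)
    (hone : C one ≤ C' one) (hx : x ∈ S) (hx' : x' ∈ S)
    (hmax : IsMaxOn (fun y => nashWelfare C (v · y)) S x)
    (hmax' : IsMaxOn (fun y => nashWelfare C' (v · y)) S x') :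
    v one x ≤ v one x' := by
  have : Nonempty N := ⟨one⟩
  rcases hone.eq_or_lt with heq | hlt
  · obtain rfl : C = C' := funext fun i => by
      by_cases hi : i = one
      · rw [hi, heq]
      · exact hCC' i hi
    exact (eq_of_isMaxOn_nashWelfare hv hv₀ hpos hC hx hx' hmax hmax' hC'one).le
  · have hfactor (y : E) (hy : y ∈ S) : nashWelfare C' (v · y) =
        nashWelfare C (v · y) * v one y ^ (C' one - C one) :=
      nashWelfare_eq_mul_rpow_sub (hC one) hone hCC' (hv₀ one y hy)
    have hWx' : 0 < nashWelfare C (v · x') := by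
      have := nashWelfare_pos_of_isMaxOn hv hv₀ hpos hmax'
      rw [hfactor x' hx'] at this
      exact pos_of_mul_pos_left this (Real.rpow_nonneg (hv₀ one x' hx') _)
    have hrpow : v one x ^ (C' one - C one) ≤ v one x' ^ (C' one - C one) :=
      le_of_isMaxOn_of_isMaxOn_mul hx hx' hmax
        (hmax'.congr (Filter.eventually_principal.2 hfactor) (hfactor x' hx')) hWx'
        (Real.rpow_nonneg (hv₀ one x hx) _)
    exact (Real.rpow_le_rpow_iff (hv₀ one x hx) (hv₀ one x' hx') (sub_pos.2 hlt)).1 hrpow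

end ConcaveUtilities

section Util

variable {A : Type*} [Fintype A] {u δ : A → ℝ}

lemma util_nonneg (hu : 0 ≤ u) (hδ : 0 ≤ δ) : 0 ≤ util u δ :=
  sum_nonneg fun x _ => mul_nonneg (hδ x) (hu x)

lemma util_single [DecidableEq A] (u : A → ℝ) (x : A) : util u (Pi.single x 1) = u x := by
  simp [util, Pi.single_apply]

lemma exists_mem_stdSimplex_util_pos (hu : ∃ x, 0 < u x) :
    ∃ δ ∈ stdSimplex ℝ A, 0 < util u δ := by
  classical
  obtain ⟨x, hx⟩ := hu
  exact ⟨Pi.single x 1, single_mem_stdSimplex ℝ x, by rwa [util_single]⟩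

lemma concaveOn_util (u : A → ℝ) {S : Set (A → ℝ)} (hS : Convex ℝ S) : ConcaveOn ℝ S (util u) :=
  (Fintype.linearCombination ℝ u).concaveOn hS

end Util

theorem nash_utility_monotone_in_contribution {A N : Type*}
    [Fintype A] [Nonempty A] [Fintype N]
    (u : N → A → ℝ) (hu : ∀ i x, 0 ≤ u i x)
    (hacc : ∀ i, ∃ x, 0 < u i x)
    (one : N)
    (C C' : N → ℝ) (hC : ∀ i, 0 < C i)
    (hCC' : ∀ i, i ≠ one → C i = C' i)
    (hone : C one ≤ C' one)
    (δ δ' : A → ℝ)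
    (hδ : IsDistribution δ 1 ∧ ∀ d : A → ℝ, IsDistribution d 1 →
      nashProduct u C d ≤ nashProduct u C δ)
    (hδ' : IsDistribution δ' 1 ∧ ∀ d : A → ℝ, IsDistribution d 1 →
      nashProduct u C' d ≤ nashProduct u C' δ') :
    util (u one) δ ≤ util (u one) δ' := by
  -- `IsDistribution · 1` unfolds to membership in `stdSimplex ℝ A`.
  exact nash_utility_monotone_in_contribution_general
    (fun i => concaveOn_util (u i) (convex_stdSimplex ℝ A)) (fun i _ hd => util_nonneg (hu i) hd.1)
    (fun i => exists_mem_stdSimplex_util_pos (hacc i)) (fun i => (hC i).le)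
    ((hC one).trans_le hone) hCC' hone hδ.1 hδ'.1 (isMaxOn_iff.2 hδ.2) (isMaxOn_iff.2 hδ'.2)
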